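/- Suppose the left global Gorenstein weak injective dimension of R is finite. Then ℓ.GwiD(R) ≤ n if and only if every weak injective R-module has projective dimension at most n, if and only if every R-module of finite weak injective dimension has projective dimension at most n. -/

import Mathlib

open CategoryTheory

universe u

noncomputable section

variable (R : Type u) [Ring R]

/-- Vanishing of `Ext^n_R(N, M)` for left `R`-modules, expressed via the `Ext` bifunctor
on the `ℤ`-linear abelian category `ModuleCat R`. -/
def ExtVanish (n : ℕ) (N M : ModuleCat.{u} R) : Prop :=
  Subsingleton (((_root_.Ext ℤ (ModuleCat.{u} R) n).obj (Opposite.op N)).obj M)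

/-- An `R`-module is super finitely presented if it admits a resolution by
finitely generated projective modules. -/
def SuperFinitelyPresented (N : ModuleCat.{u} R) : Prop :=
  ∃ (F : ℕ → ModuleCat.{u} R) (d : ∀ n, F (n + 1) →ₗ[R] F n) (ε : F 0 →ₗ[R] N),
    (∀ n, Module.Finite R (F n)) ∧ (∀ n, Module.Projective R (F n)) ∧
    Function.Surjective ε ∧ Function.Exact (d 0) ε ∧
    (∀ n, Function.Exact (d (n + 1)) (d n))

/-- An `R`-module `W` is weak injective if `Ext^1_R(N, W) = 0` for every super finitely
presented module `N`. -/
def WeakInjective (W : ModuleCat.{u} R) : Prop :=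
  ∀ N : ModuleCat.{u} R, SuperFinitelyPresented R N → ExtVanish R 1 N W

/-- `wid_R M ≤ n` : `Ext^{n+1}_R(N, M) = 0` for every super finitely presented `N`. -/
def WidLE (M : ModuleCat.{u} R) (n : ℕ) : Prop :=
  ∀ N : ModuleCat.{u} R, SuperFinitelyPresented R N → ExtVanish R (n + 1) N M

/-- The weak injective dimension, as an element of `ℕ∞`. -/
def Wid (M : ModuleCat.{u} R) : ℕ∞ :=
  sInf {c : ℕ∞ | ∃ n : ℕ, c = n ∧ WidLE R M n}

/-- A doubly infinite exact complex of injective modules which stays exact after applying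
`Hom_R(W, -)` for every module `W` in the test class `𝒯`. -/
def IsTotallyAcyclicInjComplex (𝒯 : ModuleCat.{u} R → Prop)
    (I : ℤ → ModuleCat.{u} R) (d : ∀ n : ℤ, I n →ₗ[R] I (n + 1)) : Prop :=
  (∀ n, Module.Injective R (I n)) ∧
  (∀ n, Function.Exact (d n) (d (n + 1))) ∧
  (∀ W : ModuleCat.{u} R, 𝒯 W → ∀ n,
    Function.Exact (fun g : W →ₗ[R] I n => (d n).comp g)
      (fun g : W →ₗ[R] I (n + 1) => (d (n + 1)).comp g))

/-- `M` is Gorenstein injective relative to the test class `𝒯` : `M` is the cokernel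
`Coker (I_1 → I_0)` of a `Hom(𝒯, -)`-exact exact complex of injective modules. -/
def GorensteinRelInjective (𝒯 : ModuleCat.{u} R → Prop) (M : ModuleCat.{u} R) : Prop :=
  ∃ (I : ℤ → ModuleCat.{u} R) (d : ∀ n : ℤ, I n →ₗ[R] I (n + 1)) (π : I 0 →ₗ[R] M),
    IsTotallyAcyclicInjComplex R 𝒯 I d ∧
    Function.Surjective π ∧ Function.Exact (d (-1)) π

/-- Gorenstein weak injective modules: the test class is that of weak injective modules. -/
def GorensteinWeakInjective (M : ModuleCat.{u} R) : Prop :=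
  GorensteinRelInjective R (WeakInjective R) M

/-- Gorenstein injective modules: the test class is that of injective modules. -/
def GorensteinInjective (M : ModuleCat.{u} R) : Prop :=
  GorensteinRelInjective R (fun E => Module.Injective R E) M

/-- The data of an exact sequence `0 → M → G^0 → ⋯ → G^n → 0` (the modules `G^i` for
`i > n` being trivial). -/
def IsFiniteCoresolution (M : ModuleCat.{u} R) (n : ℕ) (G : ℕ → ModuleCat.{u} R)
    (d : ∀ i, G i →ₗ[R] G (i + 1)) (ε : M →ₗ[R] G 0) : Prop :=
  Function.Injective ε ∧ Function.Exact ε (d 0) ∧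
  (∀ i, Function.Exact (d i) (d (i + 1))) ∧
  (∀ i, n < i → ∀ x : G i, x = 0)

/-- `Gwid_R M ≤ n` : `M` has a coresolution of length `n` by Gorenstein weak injective
modules. -/
def GwidLE (M : ModuleCat.{u} R) (n : ℕ) : Prop :=
  ∃ (G : ℕ → ModuleCat.{u} R) (d : ∀ i, G i →ₗ[R] G (i + 1)) (ε : M →ₗ[R] G 0),
    IsFiniteCoresolution R M n G d ε ∧ ∀ i, GorensteinWeakInjective R (G i)

/-- The Gorenstein weak injective dimension, as an element of `ℕ∞`. -/
def Gwid (M : ModuleCat.{u} R) : ℕ∞ :=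
  sInf {c : ℕ∞ | ∃ n : ℕ, c = n ∧ GwidLE R M n}

/-- `Gid_R M ≤ n`, via coresolutions by Gorenstein injective modules. -/
def GidLE (M : ModuleCat.{u} R) (n : ℕ) : Prop :=
  ∃ (G : ℕ → ModuleCat.{u} R) (d : ∀ i, G i →ₗ[R] G (i + 1)) (ε : M →ₗ[R] G 0),
    IsFiniteCoresolution R M n G d ε ∧ ∀ i, GorensteinInjective R (G i)

/-- The Gorenstein injective dimension, as an element of `ℕ∞`. -/
def Gid (M : ModuleCat.{u} R) : ℕ∞ :=
  sInf {c : ℕ∞ | ∃ n : ℕ, c = n ∧ GidLE R M n}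

/-- `id_R M ≤ n`, via coresolutions by injective modules. -/
def IdLE (M : ModuleCat.{u} R) (n : ℕ) : Prop :=
  ∃ (G : ℕ → ModuleCat.{u} R) (d : ∀ i, G i →ₗ[R] G (i + 1)) (ε : M →ₗ[R] G 0),
    IsFiniteCoresolution R M n G d ε ∧ ∀ i, Module.Injective R (G i)

/-- The injective dimension, as an element of `ℕ∞`. -/
def Idim (M : ModuleCat.{u} R) : ℕ∞ :=
  sInf {c : ℕ∞ | ∃ n : ℕ, c = n ∧ IdLE R M n}

/-- The data of an exact sequence `0 → P_n → ⋯ → P_0 → M → 0`. -/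
def IsFiniteResolution (M : ModuleCat.{u} R) (n : ℕ) (P : ℕ → ModuleCat.{u} R)
    (d : ∀ i, P (i + 1) →ₗ[R] P i) (ε : P 0 →ₗ[R] M) : Prop :=
  Function.Surjective ε ∧ Function.Exact (d 0) ε ∧
  (∀ i, Function.Exact (d (i + 1)) (d i)) ∧
  (∀ i, n < i → ∀ x : P i, x = 0)

/-- `pd_R M ≤ n`, via resolutions by projective modules. -/
def PdLE (M : ModuleCat.{u} R) (n : ℕ) : Prop :=
  ∃ (P : ℕ → ModuleCat.{u} R) (d : ∀ i, P (i + 1) →ₗ[R] P i) (ε : P 0 →ₗ[R] M),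
    IsFiniteResolution R M n P d ε ∧ ∀ i, Module.Projective R (P i)

end

variable (R : Type u) [Ring R]

/-- A short exact sequence `0 → L → M → N → 0` of `R`-modules. -/
def ShortExactSeq (L M N : ModuleCat.{u} R) (f : L →ₗ[R] M) (g : M →ₗ[R] N) : Prop :=
  Function.Injective f ∧ Function.Surjective g ∧ Function.Exact f g

/-- Exactness of `0 → Hom(C, X) → Hom(B, X) → Hom(A, X) → 0` induced by
`0 → A → B → C → 0`. -/
def HomContraExact (X : ModuleCat.{u} R) {A B C : ModuleCat.{u} R}
    (f : A →ₗ[R] B) (g : B →ₗ[R] C) : Prop :=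
  Function.Injective (fun h : C →ₗ[R] X => h.comp g) ∧
  Function.Exact (fun h : C →ₗ[R] X => h.comp g) (fun h : B →ₗ[R] X => h.comp f) ∧
  Function.Surjective (fun h : B →ₗ[R] X => h.comp f)

/-- A short exact sequence is `GWI`-copure exact if `Hom_R(-, X)` leaves it exact for
every Gorenstein weak injective module `X`. -/
def GWICopureExact {A B C : ModuleCat.{u} R} (f : A →ₗ[R] B) (g : B →ₗ[R] C) : Prop :=
  ShortExactSeq R A B C f g ∧
  ∀ X : ModuleCat.{u} R, GorensteinWeakInjective R X → HomContraExact R X f g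

/-- `M` is `GWI`-copure injective if `Hom_R(-, M)` is exact on every `GWI`-copure exact
sequence. -/
def GWICopureInjectiveMod (M : ModuleCat.{u} R) : Prop :=
  ∀ (A B C : ModuleCat.{u} R) (f : A →ₗ[R] B) (g : B →ₗ[R] C),
    GWICopureExact R f g → HomContraExact R M f g

/-- `φ : M → G` is a Gorenstein weak injective preenvelope of `M`. -/
def GWIPreenvelope (M G : ModuleCat.{u} R) (φ : M →ₗ[R] G) : Prop :=
  GorensteinWeakInjective R G ∧
  ∀ G' : ModuleCat.{u} R, GorensteinWeakInjective R G' →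
    ∀ f : M →ₗ[R] G', ∃ g : G →ₗ[R] G', g.comp φ = f

/-- A `WI`-pure Tate injective resolution of `M` : an injective resolution
`0 → M → E^0 → E^1 → ⋯`, a `WI`-pure exact complex `T` of injectives, and a chain map
`u : E → T` which is an isomorphism in all sufficiently large degrees. -/
def WIPureTateInjectiveResolution (M : ModuleCat.{u} R)
    (E : ℕ → ModuleCat.{u} R) (dE : ∀ n, E n →ₗ[R] E (n + 1)) (ε : M →ₗ[R] E 0)
    (T : ℤ → ModuleCat.{u} R) (dT : ∀ n : ℤ, T n →ₗ[R] T (n + 1))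
    (u : ∀ n : ℕ, E n →ₗ[R] T n) : Prop :=
  (∀ n, Module.Injective R (E n)) ∧ Function.Injective ε ∧
  Function.Exact ε (dE 0) ∧ (∀ n, Function.Exact (dE n) (dE (n + 1))) ∧
  IsTotallyAcyclicInjComplex R (WeakInjective R) T dT ∧
  (∀ n : ℕ, (dT n).comp (u n) = (u (n + 1)).comp (dE n)) ∧
  ∃ N : ℕ, ∀ n, N ≤ n → Function.Bijective (u n)

/-- Vanishing of the relative Tate cohomology `Êxt^i_GWI(N, M)` for all `i ∈ ℤ`,
computed from the `WI`-pure exact complex `T` : the complex `Hom_R(N, T)` is exact. -/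
def ExtHatVanishesAll (N : ModuleCat.{u} R) (T : ℤ → ModuleCat.{u} R)
    (dT : ∀ n : ℤ, T n →ₗ[R] T (n + 1)) : Prop :=
  ∀ n : ℤ, Function.Exact (fun g : N →ₗ[R] T n => (dT n).comp g)
    (fun g : N →ₗ[R] T (n + 1) => (dT (n + 1)).comp g)

section Auxiliary

variable {R}

/-- Vanishing of `Ext^{n+1}` is exactness of `Hom(P, M)` in degree `n + 1`, for any projective
resolution `P`. -/
lemma extVanish_succ_iff {N M : ModuleCat.{u} R} (P : ProjectiveResolution N) (n : ℕ) :
    ExtVanish R (n + 1) N M ↔ ∀ f : P.complex.X (n + 1) ⟶ M,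
      P.complex.d (n + 2) (n + 1) ≫ f = 0 → ∃ g, P.complex.d (n + 1) n ≫ g = f := by
  rw [ExtVanish, ← ModuleCat.isZero_iff_subsingleton (R := ℤ),
    (P.isoExt (R := ℤ) (n + 1) M).isZero_iff, ← HomologicalComplex.exactAt_iff_isZero_homology,
    HomologicalComplex.exactAt_iff' _ n (n + 1) (n + 2) (by simp) (by simp),
    ShortComplex.moduleCat_exact_iff]
  rfl

lemma ShortExactSeq.shortExact {A B C : ModuleCat.{u} R} {f : A →ₗ[R] B} {g : B →ₗ[R] C}
    (h : ShortExactSeq R A B C f g) :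
    (ShortComplex.mk (C := ModuleCat.{u} R) (X₁ := A) (X₂ := B) (X₃ := C)
      (ModuleCat.ofHom f) (ModuleCat.ofHom g)
      (ModuleCat.hom_ext h.2.2.linearMap_comp_eq_zero)).ShortExact where
  exact := (ShortComplex.ShortExact.moduleCat_exact_iff_function_exact _).2 h.2.2
  mono_f := (ModuleCat.mono_iff_injective _).2 h.1
  epi_g := (ModuleCat.epi_iff_surjective _).2 h.2.1

lemma weakInjective_of_injective {I : ModuleCat.{u} R} (hI : Module.Injective R I) :
    WeakInjective R I := by
  intro N _
  have : Injective I := Module.injective_object_of_injective_module R I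
  have P : ProjectiveResolution N := projectiveResolution N
  rw [extVanish_succ_iff P]
  intro f hf
  exact ⟨(P.exact_succ 0).descToInjective f hf, (P.exact_succ 0).comp_descToInjective f hf⟩

/-- Dimension shifting along an injective module. -/
lemma ShortExactSeq.widLE_right {A B C : ModuleCat.{u} R} {f : A →ₗ[R] B} {g : B →ₗ[R] C}
    (h : ShortExactSeq R A B C f g) (hB : Module.Injective R B) {k : ℕ}
    (hA : WidLE R A (k + 1)) : WidLE R C k := by
  intro N hN
  have : Injective B := Module.injective_object_of_injective_module R B
  have P : ProjectiveResolution N := projectiveResolution N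
  have hA' := (extVanish_succ_iff P (k + 1)).1 (hA N hN)
  rw [extVanish_succ_iff P]
  intro φ hφ
  have hS := h.shortExact
  have := hS.mono_f
  have := hS.epi_g
  set i : A ⟶ B := ModuleCat.ofHom f
  set p : B ⟶ C := ModuleCat.ofHom g
  have hip : i ≫ p = 0 := ModuleCat.hom_ext h.2.2.linearMap_comp_eq_zero
  let φ' := Projective.factorThru φ p
  have hφ' : φ' ≫ p = φ := Projective.factorThru_comp φ p
  have h1 : (P.complex.d (k + 2) (k + 1) ≫ φ') ≫ p = 0 := by rw [Category.assoc, hφ', hφ]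
  let ψ := hS.exact.lift (P.complex.d (k + 2) (k + 1) ≫ φ') h1
  have hψ : ψ ≫ i = P.complex.d (k + 2) (k + 1) ≫ φ' := hS.exact.lift_f _ h1
  obtain ⟨θ, hθ⟩ := hA' ψ (by rw [← cancel_mono i]; simp [hψ])
  have h2 : P.complex.d (k + 2) (k + 1) ≫ (φ' - θ ≫ i) = 0 := by
    rw [Preadditive.comp_sub, ← Category.assoc, hθ, hψ, sub_self]
  refine ⟨(P.exact_succ k).descToInjective _ h2 ≫ p, ?_⟩
  have h3 := (P.exact_succ k).comp_descToInjective _ h2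
  dsimp only at h3
  rw [← Category.assoc, h3, Preadditive.sub_comp, hφ', Category.assoc, hip]
  simp

open Abelian in
lemma ShortExactSeq.exists_lift {A B C : ModuleCat.{u} R} {f : A →ₗ[R] B} {g : B →ₗ[R] C}
    (h : ShortExactSeq R A B C f g) {W : ModuleCat.{u} R} [hW : Subsingleton (Ext W A 1)]
    (φ : W →ₗ[R] C) : ∃ ψ : W →ₗ[R] B, g.comp ψ = φ := by
  obtain ⟨x, hx⟩ := Ext.covariant_sequence_exact₃ W h.shortExact
    (Ext.mk₀ (ModuleCat.ofHom φ : W ⟶ C)) (zero_add 1) (hW.elim _ _)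
  obtain ⟨x, rfl⟩ := (Ext.mk₀_bijective W B).2 x
  rw [Ext.mk₀_comp_mk₀] at hx
  exact ⟨x.hom, congrArg ModuleCat.Hom.hom ((Ext.mk₀_bijective W C).1 hx)⟩

open Abelian in
lemma ShortExactSeq.subsingleton_ext_left_one {A B C : ModuleCat.{u} R} {f : A →ₗ[R] B}
    {g : B →ₗ[R] C} (h : ShortExactSeq R A B C f g) {W : ModuleCat.{u} R}
    [hW : Subsingleton (Ext W B 1)]
    (hl : ∀ φ : W →ₗ[R] C, ∃ ψ : W →ₗ[R] B, g.comp ψ = φ) : Subsingleton (Ext W A 1) := by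
  refine subsingleton_of_forall_eq 0 fun x => ?_
  obtain ⟨y, rfl⟩ := Ext.covariant_sequence_exact₁ W h.shortExact x (hW.elim _ _) (zero_add 1)
  obtain ⟨y, rfl⟩ := (Ext.mk₀_bijective W C).2 y
  obtain ⟨ψ, hψ⟩ := hl y.hom
  obtain rfl : (ModuleCat.ofHom ψ : W ⟶ B) ≫ (ModuleCat.ofHom g : B ⟶ C) = y :=
    ModuleCat.hom_ext hψ
  have := h.shortExact.comp_extClass
  dsimp only at this
  rw [← Ext.mk₀_comp_mk₀, Ext.comp_assoc_of_second_deg_zero, this, Ext.comp_zero]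

open Abelian in
lemma ShortExactSeq.subsingleton_ext_left {A B C : ModuleCat.{u} R} {f : A →ₗ[R] B}
    {g : B →ₗ[R] C} (h : ShortExactSeq R A B C f g) {W : ModuleCat.{u} R} {i : ℕ}
    (hB : Subsingleton (Ext W B (i + 1))) (hC : Subsingleton (Ext W C i)) :
    Subsingleton (Ext W A (i + 1)) := by
  refine subsingleton_of_forall_eq 0 fun x => ?_
  obtain ⟨y, rfl⟩ := Ext.covariant_sequence_exact₁ W h.shortExact x (hB.elim _ _) rfl
  rw [hC.elim y 0, Ext.zero_comp]

open Abelian in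
lemma ShortExactSeq.subsingleton_ext_middle {A B C : ModuleCat.{u} R} {f : A →ₗ[R] B}
    {g : B →ₗ[R] C} (h : ShortExactSeq R A B C f g) {W : ModuleCat.{u} R} {i : ℕ}
    (hA : Subsingleton (Ext W A i)) (hC : Subsingleton (Ext W C i)) :
    Subsingleton (Ext W B i) := by
  refine subsingleton_of_forall_eq 0 fun x => ?_
  obtain ⟨y, rfl⟩ := Ext.covariant_sequence_exact₂ W h.shortExact x (hC.elim _ _)
  rw [hA.elim y 0, Ext.zero_comp]

open Abelian in
lemma ShortExactSeq.subsingleton_ext_right {A B C : ModuleCat.{u} R} {f : A →ₗ[R] B}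
    {g : B →ₗ[R] C} (h : ShortExactSeq R A B C f g) {W : ModuleCat.{u} R} {i : ℕ}
    (hB : Subsingleton (Ext W B i)) (hA : Subsingleton (Ext W A (i + 1))) :
    Subsingleton (Ext W C i) := by
  refine subsingleton_of_forall_eq 0 fun x => ?_
  obtain ⟨y, rfl⟩ := Ext.covariant_sequence_exact₃ W h.shortExact x rfl (hA.elim _ _)
  rw [hB.elim y 0, Ext.zero_comp]

open Abelian in
lemma subsingleton_ext_of_injective {I : ModuleCat.{u} R} (hI : Module.Injective R I)
    (W : ModuleCat.{u} R) (i : ℕ) : Subsingleton (Ext W I (i + 1)) :=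
  have : Injective I := Module.injective_object_of_injective_module R I
  Ext.subsingleton_of_injective W I i

lemma exists_injective_embedding (M : ModuleCat.{u} R) :
    ∃ (E V : ModuleCat.{u} R) (f : M →ₗ[R] E) (g : E →ₗ[R] V),
      Module.Injective R E ∧ ShortExactSeq R M E V f g := by
  refine ⟨Injective.under M, .of R (_ ⧸ LinearMap.range (Injective.ι M).hom), (Injective.ι M).hom,
    Submodule.mkQ _, ?_, (ModuleCat.mono_iff_injective _).1 inferInstance,
    Submodule.mkQ_surjective _, ?_⟩
  · have : Injective (ModuleCat.of R (Injective.under M : ModuleCat.{u} R)) :=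
      Injective.injective_under M
    exact Module.injective_module_of_injective_object R _
  · rw [LinearMap.exact_iff, Submodule.ker_mkQ]

lemma injective_prod {I J : Type u} [AddCommGroup I] [Module R I] [AddCommGroup J] [Module R J]
    (hI : Module.Injective R I) (hJ : Module.Injective R J) : Module.Injective R (I × J) where
  out X Y _ _ _ _ f hf g := by
    obtain ⟨a, ha⟩ := hI.out f hf ((LinearMap.fst R I J).comp g)
    obtain ⟨b, hb⟩ := hJ.out f hf ((LinearMap.snd R I J).comp g)
    exact ⟨a.prod b, fun x => Prod.ext (ha x) (hb x)⟩

lemma injective_of_retract {I J : Type u} [AddCommGroup I] [Module R I] [AddCommGroup J]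
    [Module R J] (hI : Module.Injective R I) (i : J →ₗ[R] I) (r : I →ₗ[R] J)
    (h : ∀ x, r (i x) = x) : Module.Injective R J where
  out X Y _ _ _ _ f hf g := by
    obtain ⟨a, ha⟩ := hI.out f hf (i.comp g)
    exact ⟨r.comp a, fun x => by simp [ha, h]⟩

/-- `Ext^i(W, M) = 0` for all weak injective `W` and all `i > 0`. -/
def WeakInjectiveOrthogonal (M : ModuleCat.{u} R) : Prop :=
  ∀ W : ModuleCat.{u} R, WeakInjective R W → ∀ i : ℕ, Subsingleton (Abelian.Ext W M (i + 1))

lemma weakInjectiveOrthogonal_of_injective {I : ModuleCat.{u} R} (hI : Module.Injective R I) :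
    WeakInjectiveOrthogonal I :=
  fun W _ => subsingleton_ext_of_injective hI W

lemma ShortExactSeq.orthogonal_middle {A B C : ModuleCat.{u} R} {f : A →ₗ[R] B} {g : B →ₗ[R] C}
    (h : ShortExactSeq R A B C f g) (hA : WeakInjectiveOrthogonal A)
    (hC : WeakInjectiveOrthogonal C) : WeakInjectiveOrthogonal B :=
  fun W hW i => h.subsingleton_ext_middle (hA W hW i) (hC W hW i)

lemma ShortExactSeq.orthogonal_right {A B C : ModuleCat.{u} R} {f : A →ₗ[R] B} {g : B →ₗ[R] C}
    (h : ShortExactSeq R A B C f g) (hA : WeakInjectiveOrthogonal A)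
    (hB : WeakInjectiveOrthogonal B) : WeakInjectiveOrthogonal C :=
  fun W hW i => h.subsingleton_ext_right (hB W hW i) (hA W hW (i + 1))

lemma ShortExactSeq.exists_lift_of_orthogonal {A B C : ModuleCat.{u} R} {f : A →ₗ[R] B}
    {g : B →ₗ[R] C} (h : ShortExactSeq R A B C f g) (hA : WeakInjectiveOrthogonal A)
    {W : ModuleCat.{u} R} (hW : WeakInjective R W) (φ : W →ₗ[R] C) :
    ∃ ψ : W →ₗ[R] B, g.comp ψ = φ :=
  have := hA W hW 0
  h.exists_lift φ

/-- `M` is the quotient of an injective module by a member of the class `P`. -/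
def HasInjectiveCover (P : ModuleCat.{u} R → Prop) (M : ModuleCat.{u} R) : Prop :=
  ∃ (K I : ModuleCat.{u} R) (f : K →ₗ[R] I) (g : I →ₗ[R] M),
    P K ∧ Module.Injective R I ∧ ShortExactSeq R K I M f g

lemma HasInjectiveCover.mono {P Q : ModuleCat.{u} R → Prop} (h : ∀ M, P M → Q M)
    {M : ModuleCat.{u} R} : HasInjectiveCover P M → HasInjectiveCover Q M
  | ⟨K, I, f, g, hK, hI, hs⟩ => ⟨K, I, f, g, h K hK, hI, hs⟩

/-- The largest class of orthogonal modules which are quotients of injective modules by members of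
the class. -/
def OrthogonallyResolved (M : ModuleCat.{u} R) : Prop :=
  ∃ P : ModuleCat.{u} R → Prop, P M ∧
    ∀ M, P M → WeakInjectiveOrthogonal M ∧ HasInjectiveCover P M

namespace OrthogonallyResolved

lemma orthogonal {M : ModuleCat.{u} R} : OrthogonallyResolved M → WeakInjectiveOrthogonal M
  | ⟨_, hM, h⟩ => (h M hM).1

lemma cover {M : ModuleCat.{u} R} :
    OrthogonallyResolved M → HasInjectiveCover OrthogonallyResolved M
  | ⟨P, hM, h⟩ => (h M hM).2.mono fun _ hK => ⟨P, hK, h⟩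

lemma of_cover {M : ModuleCat.{u} R} (hM : WeakInjectiveOrthogonal M)
    (h : HasInjectiveCover OrthogonallyResolved M) : OrthogonallyResolved M := by
  refine ⟨fun N => OrthogonallyResolved N ∨ N = M, .inr rfl, ?_⟩
  rintro N (hN | rfl)
  · exact ⟨hN.orthogonal, hN.cover.mono fun _ => .inl⟩
  · exact ⟨hM, h.mono fun _ => .inl⟩

/-- The horseshoe lemma: closure under extensions. -/
lemma extension {A B C : ModuleCat.{u} R} {f : A →ₗ[R] B} {g : B →ₗ[R] C}
    (h : ShortExactSeq R A B C f g) (hA : OrthogonallyResolved A) (hC : OrthogonallyResolved C) :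
    OrthogonallyResolved B := by
  refine ⟨fun B => ∃ (A C : ModuleCat.{u} R) (f : A →ₗ[R] B) (g : B →ₗ[R] C),
    OrthogonallyResolved A ∧ OrthogonallyResolved C ∧ ShortExactSeq R A B C f g,
    ⟨A, C, f, g, hA, hC, h⟩, ?_⟩
  clear h hA hC f g A B C
  rintro B ⟨A, C, f, g, hA, hC, h⟩
  refine ⟨h.orthogonal_middle hA.orthogonal hC.orthogonal, ?_⟩
  obtain ⟨KA, IA, a, p, hKA, hIA, hsA⟩ := hA.cover
  obtain ⟨KC, IC, c, q, hKC, hIC, hsC⟩ := hC.cover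
  obtain ⟨r, hr⟩ := h.exists_lift_of_orthogonal hA.orthogonal (weakInjective_of_injective hIC) q
  replace hr : ∀ y, g (r y) = q y := fun y => LinearMap.congr_fun hr y
  let t : IA × IC →ₗ[R] B := (f.comp p).coprod r
  have ht : ∀ z : IA × IC, t z = f (p z.1) + r z.2 := fun _ => rfl
  have hgf : ∀ x, g (f x) = 0 := h.2.2.apply_apply_eq_zero
  have hq : ∀ z : LinearMap.ker t, q z.1.2 = 0 := by
    rintro ⟨z, hz⟩
    have := congrArg g (LinearMap.mem_ker.1 hz)
    simpa [ht, hgf, hr] using this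
  obtain ⟨s, hs⟩ : ∃ s : LinearMap.ker t →ₗ[R] KC, ∀ z, c (s z) = z.1.2 := by
    refine ⟨(LinearEquiv.ofInjective c hsC.1).symm.toLinearMap.comp
      (LinearMap.codRestrict _ ((LinearMap.snd R IA IC).comp (LinearMap.ker t).subtype)
        fun z => (hsC.2.2 _).1 (hq z)), fun z => ?_⟩
    exact congrArg Subtype.val (LinearEquiv.apply_symm_apply (LinearEquiv.ofInjective c hsC.1) _)
  let e : KA →ₗ[R] LinearMap.ker t :=
    LinearMap.codRestrict _ ((LinearMap.inl R IA IC).comp a) fun x => by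
      simp [ht, hsA.2.2.apply_apply_eq_zero]
  have he : ∀ x, (e x).1 = (a x, 0) := fun _ => rfl
  refine ⟨.of R (LinearMap.ker t), .of R (IA × IC), (LinearMap.ker t).subtype, t,
    ⟨KA, KC, e, s, hKA, hKC, ?_, ?_, ?_⟩, ?_, Subtype.val_injective, ?_, ?_⟩
  · intro x y hxy
    exact hsA.1 (congrArg (fun z => z.1.1) hxy)
  · intro k
    obtain ⟨x, hx⟩ := (h.2.2 (r (c k))).1 (by rw [hr]; exact hsC.2.2.apply_apply_eq_zero k)
    obtain ⟨y, rfl⟩ := hsA.2.1 x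
    refine ⟨⟨(-y, c k), ?_⟩, hsC.1 ?_⟩
    · simp [ht, hx]
    · rw [hs]
  · intro z
    constructor
    · intro hz
      have h2 : z.1.2 = 0 := by rw [← hs, hz, map_zero]
      have h1 : p z.1.1 = 0 := h.1 (by simpa [ht, h2] using LinearMap.mem_ker.1 z.2)
      obtain ⟨x, hx⟩ := (hsA.2.2 _).1 h1
      exact ⟨x, Subtype.ext (Prod.ext hx h2.symm)⟩
    · rintro ⟨x, rfl⟩
      exact hsC.1 (by rw [hs, he, map_zero])
  · exact injective_prod hIA hIC
  · intro b
    obtain ⟨y, hy⟩ := hsC.2.1 (g b)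
    obtain ⟨x, hx⟩ := (h.2.2 (b - r y)).1 (by rw [map_sub, hr, hy, sub_self])
    obtain ⟨w, rfl⟩ := hsA.2.1 x
    exact ⟨(w, y), by simp [ht, hx]⟩
  · exact LinearMap.exact_subtype_ker_map t

lemma kernel {C G Z : ModuleCat.{u} R} {f : C →ₗ[R] G} {g : G →ₗ[R] Z}
    (h : ShortExactSeq R C G Z f g) (hC : WeakInjectiveOrthogonal C)
    (hG : OrthogonallyResolved G) (hZ : OrthogonallyResolved Z) : OrthogonallyResolved C := by
  obtain ⟨L, J, a, q, hL, hJ, hsL⟩ := hZ.cover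
  let t : G × J →ₗ[R] Z := g.coprod (-q)
  have ht : ∀ z : G × J, t z = g z.1 - q z.2 := fun z => by simp [t, sub_eq_add_neg]
  have hD : OrthogonallyResolved (.of R (LinearMap.ker t)) := by
    let e : L →ₗ[R] LinearMap.ker t :=
      LinearMap.codRestrict _ ((LinearMap.inr R G J).comp a) fun x => by
        simp [ht, hsL.2.2.apply_apply_eq_zero]
    refine extension (f := e) (g := (LinearMap.fst R G J).comp (LinearMap.ker t).subtype)
      ⟨fun x y hxy => hsL.1 (congrArg (fun z => z.1.2) hxy), fun x => ?_, fun z => ?_⟩ hL hG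
    · obtain ⟨y, hy⟩ := hsL.2.1 (g x)
      exact ⟨⟨(x, y), by simp [ht, hy]⟩, rfl⟩
    · constructor
      · intro hz
        have h1 : z.1.1 = 0 := hz
        obtain ⟨x, hx⟩ := (hsL.2.2 z.1.2).1 (by simpa [ht, h1] using LinearMap.mem_ker.1 z.2)
        exact ⟨x, Subtype.ext (Prod.ext h1.symm hx)⟩
      · rintro ⟨x, rfl⟩
        rfl
  obtain ⟨K, E, k, p, hK, hE, hsE⟩ := hD.cover
  have hp : ∀ y, g (p y).1.1 = q (p y).1.2 := fun y =>
    sub_eq_zero.1 ((ht _).symm.trans (LinearMap.mem_ker.1 (p y).2))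
  let s : E →ₗ[R] J := (LinearMap.snd R G J).comp ((LinearMap.ker t).subtype.comp p)
  have hs : ∀ y, s y = (p y).1.2 := fun _ => rfl
  have hs_surj : Function.Surjective s := fun y => by
    obtain ⟨x, hx⟩ := h.2.1 (q y)
    obtain ⟨z, hz⟩ := hsE.2.1 ⟨(x, y), by simp [ht, hx]⟩
    exact ⟨z, by rw [hs, hz]⟩
  obtain ⟨v, hv⟩ : ∃ v : LinearMap.ker s →ₗ[R] C, ∀ y, f (v y) = (p y.1).1.1 := by
    refine ⟨(LinearEquiv.ofInjective f h.1).symm.toLinearMap.comp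
      (LinearMap.codRestrict _ ((LinearMap.fst R G J).comp
        ((LinearMap.ker t).subtype.comp (p.comp (LinearMap.ker s).subtype)))
        fun y => (h.2.2 _).1 ?_), fun y => ?_⟩
    · have : (p y.1).1.2 = 0 := LinearMap.mem_ker.1 y.2
      exact (hp y.1).trans (by rw [this, map_zero])
    · exact congrArg Subtype.val (LinearEquiv.apply_symm_apply (LinearEquiv.ofInjective f h.1) _)
  let k' : K →ₗ[R] LinearMap.ker s := LinearMap.codRestrict _ k fun x => by
    rw [LinearMap.mem_ker, hs, hsE.2.2.apply_apply_eq_zero]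
    rfl
  have hcov : ShortExactSeq R K (.of R (LinearMap.ker s)) C k' v := by
    refine ⟨fun x y hxy => hsE.1 (congrArg Subtype.val hxy), fun c => ?_, fun y => ?_⟩
    · obtain ⟨y, hy⟩ := hsE.2.1 ⟨(f c, 0), by simp [ht, h.2.2.apply_apply_eq_zero]⟩
      refine ⟨⟨y, by rw [LinearMap.mem_ker, hs, hy]⟩, h.1 ?_⟩
      rw [hv, hy]
    · constructor
      · intro hy
        have h1 : (p y.1).1.1 = 0 := by rw [← hv, hy, map_zero]
        obtain ⟨x, hx⟩ := (hsE.2.2 y.1).1 (Subtype.ext (Prod.ext h1 (LinearMap.mem_ker.1 y.2)))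
        exact ⟨x, Subtype.ext hx⟩
      · rintro ⟨x, rfl⟩
        refine h.1 ?_
        rw [hv, map_zero]
        exact congrArg (fun z => z.1.1) (hsE.2.2.apply_apply_eq_zero x)
  have hsplit : ShortExactSeq R (.of R (LinearMap.ker s)) E J (LinearMap.ker s).subtype s :=
    ⟨Subtype.val_injective, hs_surj, LinearMap.exact_subtype_ker_map s⟩
  obtain ⟨σ, hσ⟩ := hsplit.exists_lift_of_orthogonal (hcov.orthogonal_middle hK.orthogonal hC)
    (weakInjective_of_injective hJ) LinearMap.id
  refine of_cover hC ⟨K, .of R (LinearMap.ker s), k', v, hK, ?_, hcov⟩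
  refine injective_of_retract hE (LinearMap.ker s).subtype
    (LinearMap.codRestrict _ (LinearMap.id - σ.comp s) fun y => ?_) fun y => Subtype.ext ?_
  · simpa [sub_eq_zero] using (LinearMap.congr_fun hσ (s y)).symm
  · have : s y.1 = 0 := y.2
    simp [this]

lemma of_subsingleton {M : ModuleCat.{u} R} [Subsingleton M] : OrthogonallyResolved M := by
  have hI : ∀ N : ModuleCat.{u} R, Subsingleton N → Module.Injective R N := fun N _ =>
    ⟨fun _ _ _ _ _ _ _ _ _ => ⟨0, fun _ => Subsingleton.elim _ _⟩⟩
  exact ⟨fun N => Subsingleton N, ‹_›, fun N hN => ⟨weakInjectiveOrthogonal_of_injective (hI N hN),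
    N, N, 0, 0, hN, hI N hN, fun _ _ _ => hN.elim _ _, fun _ => ⟨0, hN.elim _ _⟩,
    fun _ => ⟨fun _ => ⟨0, hN.elim _ _⟩, fun _ => hN.elim _ _⟩⟩⟩

end OrthogonallyResolved

/-- `M` is a syzygy of the complex `(I, d)`. -/
def IsSyzygyOf (I : ℤ → ModuleCat.{u} R) (d : ∀ n : ℤ, I n →ₗ[R] I (n + 1))
    (M : ModuleCat.{u} R) : Prop :=
  ∃ (j : ℤ) (p : I j →ₗ[R] M), Function.Surjective p ∧ LinearMap.ker p = LinearMap.ker (d j)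

lemma isSyzygyOf_range (I : ℤ → ModuleCat.{u} R) (d : ∀ n : ℤ, I n →ₗ[R] I (n + 1)) (j : ℤ) :
    IsSyzygyOf I d (.of R (LinearMap.range (d j))) :=
  ⟨j, (d j).rangeRestrict, (d j).surjective_rangeRestrict, (d j).ker_rangeRestrict⟩

lemma IsTotallyAcyclicInjComplex.exists_embedding_of_isSyzygyOf
    {P : ModuleCat.{u} R → Prop} {I : ℤ → ModuleCat.{u} R}
    {d : ∀ n : ℤ, I n →ₗ[R] I (n + 1)} (h : IsTotallyAcyclicInjComplex R P I d)
    {M : ModuleCat.{u} R} (hM : IsSyzygyOf I d M) :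
    ∃ (j : ℤ) (f : M →ₗ[R] I (j + 1)), ShortExactSeq R M (I (j + 1))
      (.of R (LinearMap.range (d (j + 1)))) f (d (j + 1)).rangeRestrict := by
  obtain ⟨j, p, hp, hk⟩ := hM
  obtain ⟨f, hf⟩ : ∃ f : M →ₗ[R] I (j + 1), ∀ x, f (p x) = d j x :=
    ⟨((LinearMap.ker p).liftQ (d j) hk.le).comp (p.quotKerEquivOfSurjective hp).symm.toLinearMap,
      fun x => by simp⟩
  refine ⟨j, f, (injective_iff_map_eq_zero f).2 fun x hx => ?_, (d (j + 1)).surjective_rangeRestrict,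
    fun y => ?_⟩
  · obtain ⟨x, rfl⟩ := hp x
    rw [hf] at hx
    rwa [← LinearMap.mem_ker, hk]
  · rw [← LinearMap.mem_ker, LinearMap.ker_rangeRestrict, LinearMap.mem_ker, h.2.1 j y]
    constructor
    · rintro ⟨x, rfl⟩
      exact ⟨p x, hf x⟩
    · rintro ⟨x, rfl⟩
      obtain ⟨x, rfl⟩ := hp x
      exact ⟨x, (hf x).symm⟩

lemma IsTotallyAcyclicInjComplex.orthogonal_of_isSyzygyOf {I : ℤ → ModuleCat.{u} R}
    {d : ∀ n : ℤ, I n →ₗ[R] I (n + 1)} (h : IsTotallyAcyclicInjComplex R (WeakInjective R) I d)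
    {M : ModuleCat.{u} R} (hM : IsSyzygyOf I d M) : WeakInjectiveOrthogonal M := by
  intro W hW i
  induction i generalizing M with
  | zero =>
    obtain ⟨j, f, hs⟩ := h.exists_embedding_of_isSyzygyOf hM
    have := subsingleton_ext_of_injective (h.1 (j + 1)) W 0
    refine hs.subsingleton_ext_left_one fun φ => ?_
    obtain ⟨ψ, hψ⟩ := (h.2.2 W hW (j + 1) ((LinearMap.range (d (j + 1))).subtype.comp φ)).1 <| by
      ext x
      obtain ⟨y, hy⟩ := (φ x).2
      exact (congrArg (d (j + 1 + 1)) hy.symm).trans ((h.2.1 (j + 1)).apply_apply_eq_zero y)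
    exact ⟨ψ, LinearMap.ext fun x => Subtype.ext (LinearMap.congr_fun hψ x)⟩
  | succ i ih =>
    obtain ⟨j, f, hs⟩ := h.exists_embedding_of_isSyzygyOf hM
    exact hs.subsingleton_ext_left (subsingleton_ext_of_injective (h.1 _) W _)
      (ih (isSyzygyOf_range I d (j + 1)))

lemma GorensteinWeakInjective.orthogonallyResolved {M : ModuleCat.{u} R} :
    GorensteinWeakInjective R M → OrthogonallyResolved M := by
  rintro ⟨I, d, p, h, hp, hdp⟩
  refine ⟨IsSyzygyOf I d, ⟨0, p, hp, ?_⟩, fun N hN => ⟨h.orthogonal_of_isSyzygyOf hN, ?_⟩⟩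
  · rw [LinearMap.exact_iff.1 hdp]
    exact (LinearMap.exact_iff.1 (h.2.1 (-1))).symm
  · obtain ⟨j, q, hq, hk⟩ := hN
    obtain ⟨i, rfl⟩ : ∃ i, j = i + 1 := ⟨j - 1, by simp⟩
    refine ⟨_, I (i + 1), (LinearMap.range (d i)).subtype, q, isSyzygyOf_range I d i, h.1 _,
      Subtype.val_injective, hq, ?_⟩
    rw [LinearMap.exact_iff, hk, LinearMap.exact_iff.1 (h.2.1 i), Submodule.range_subtype]

/-- Splicing a bi-infinite family of short exact sequences with injective middle terms and
orthogonal kernels. -/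
lemma gorensteinWeakInjective_of_shortExactSeq (Z I : ℤ → ModuleCat.{u} R)
    (a : ∀ n, Z n →ₗ[R] I n) (b : ∀ n, I n →ₗ[R] Z (n + 1))
    (hs : ∀ n, ShortExactSeq R (Z n) (I n) (Z (n + 1)) (a n) (b n))
    (hI : ∀ n, Module.Injective R (I n)) (hZ : ∀ n, WeakInjectiveOrthogonal (Z n)) :
    GorensteinWeakInjective R (Z (0 + 1)) := by
  have key : ∀ n x, a (n + 1) x = 0 ↔ x = 0 := fun n x => map_eq_zero_iff _ (hs (n + 1)).1
  refine ⟨I, fun n => (a (n + 1)).comp (b n), b 0, ⟨hI, fun n x => ?_, fun W hW n φ => ?_⟩,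
    (hs 0).2.1, fun x => ?_⟩
  · rw [LinearMap.comp_apply, key, (hs (n + 1)).2.2 x]
    constructor
    · rintro ⟨y, rfl⟩
      obtain ⟨z, rfl⟩ := (hs n).2.1 y
      exact ⟨z, rfl⟩
    · rintro ⟨z, rfl⟩
      exact ⟨b n z, rfl⟩
  · constructor
    · intro hφ
      have h0 : ∀ x, b (n + 1) (φ x) = 0 := fun x => (key _ _).1 (LinearMap.congr_fun hφ x)
      obtain ⟨ψ, hψ⟩ : ∃ ψ : W →ₗ[R] Z (n + 1), ∀ x, a (n + 1) (ψ x) = φ x :=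
        ⟨(LinearEquiv.ofInjective _ (hs (n + 1)).1).symm.toLinearMap.comp
          (LinearMap.codRestrict _ φ fun x => ((hs (n + 1)).2.2 _).1 (h0 x)), fun x =>
          congrArg Subtype.val
            (LinearEquiv.apply_symm_apply (LinearEquiv.ofInjective _ (hs (n + 1)).1) _)⟩
      obtain ⟨θ, hθ⟩ := (hs n).exists_lift_of_orthogonal (hZ n) hW ψ
      exact ⟨θ, LinearMap.ext fun x => by
        rw [← hψ, ← hθ]
        rfl⟩
    · rintro ⟨θ, rfl⟩
      refine LinearMap.ext fun x => (key _ _).2 ?_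
      exact (hs (n + 1)).2.2.apply_apply_eq_zero _
  · rw [(hs 0).2.2 x]
    constructor
    · rintro ⟨y, rfl⟩
      obtain ⟨z, rfl⟩ := (hs (-1)).2.1 (show Z (-1 + 1) from y)
      exact ⟨z, rfl⟩
    · rintro ⟨z, rfl⟩
      exact ⟨b (-1) z, rfl⟩

/-- Joining a left-infinite and a right-infinite family of short exact sequences along a short
exact sequence `0 → L 0 → I → N 0 → 0`. -/
lemma gorensteinWeakInjective_of_splice (L J N E : ℕ → ModuleCat.{u} R) (I : ModuleCat.{u} R)
    (f : ∀ n, L (n + 1) →ₗ[R] J n) (g : ∀ n, J n →ₗ[R] L n)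
    (hL : ∀ n, ShortExactSeq R (L (n + 1)) (J n) (L n) (f n) (g n))
    (i : L 0 →ₗ[R] I) (p : I →ₗ[R] N 0) (h : ShortExactSeq R (L 0) I (N 0) i p)
    (f' : ∀ n, N n →ₗ[R] E n) (g' : ∀ n, E n →ₗ[R] N (n + 1))
    (hN : ∀ n, ShortExactSeq R (N n) (E n) (N (n + 1)) (f' n) (g' n))
    (hJ : ∀ n, Module.Injective R (J n)) (hI : Module.Injective R I)
    (hE : ∀ n, Module.Injective R (E n)) (oL : ∀ n, WeakInjectiveOrthogonal (L n))
    (oN : ∀ n, WeakInjectiveOrthogonal (N n)) : GorensteinWeakInjective R (N 0) := by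
  let Z : ℤ → ModuleCat.{u} R := fun
    | .ofNat 0 => L 0
    | .ofNat (n + 1) => N n
    | .negSucc n => L (n + 1)
  let T : ℤ → ModuleCat.{u} R := fun
    | .ofNat 0 => I
    | .ofNat (n + 1) => E n
    | .negSucc n => J n
  let a : ∀ n, Z n →ₗ[R] T n := fun
    | .ofNat 0 => i
    | .ofNat (n + 1) => f' n
    | .negSucc n => f n
  let b : ∀ n, T n →ₗ[R] Z (n + 1) := fun
    | .ofNat 0 => p
    | .ofNat (n + 1) => g' n
    | .negSucc 0 => g 0
    | .negSucc (n + 1) => g (n + 1)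
  refine gorensteinWeakInjective_of_shortExactSeq Z T a b ?_ ?_ ?_
  · rintro ((_ | n) | (_ | n))
    exacts [h, hN n, hL 0, hL (n + 1)]
  · rintro ((_ | n) | n)
    exacts [hI, hE n, hJ n]
  · rintro ((_ | n) | n)
    exacts [oL 0, oN n, oL (n + 1)]

lemma OrthogonallyResolved.gorensteinWeakInjective {M : ModuleCat.{u} R}
    (hM : OrthogonallyResolved M) : GorensteinWeakInjective R M := by
  choose K J f g hK hJ hL using fun s : {N : ModuleCat.{u} R // OrthogonallyResolved N} => s.2.cover
  choose E V f' g' hE hN using fun s : {N : ModuleCat.{u} R // WeakInjectiveOrthogonal N} =>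
    exists_injective_embedding s.1
  let l : ℕ → {N : ModuleCat.{u} R // OrthogonallyResolved N} :=
    Nat.rec ⟨K ⟨M, hM⟩, hK _⟩ fun _ s => ⟨K s, hK s⟩
  let r : ℕ → {N : ModuleCat.{u} R // WeakInjectiveOrthogonal N} :=
    Nat.rec ⟨M, hM.orthogonal⟩ fun _ s =>
      ⟨V s, (hN s).orthogonal_right s.2 (weakInjectiveOrthogonal_of_injective (hE s))⟩
  exact gorensteinWeakInjective_of_splice (fun n => (l n).1) (fun n => J (l n))
    (fun n => (r n).1) (fun n => E (r n)) (J ⟨M, hM⟩) (fun n => f (l n)) (fun n => g (l n))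
    (fun n => hL (l n)) (f ⟨M, hM⟩) (g ⟨M, hM⟩) (hL ⟨M, hM⟩) (fun n => f' (r n))
    (fun n => g' (r n)) (fun n => hN (r n)) (fun n => hJ (l n)) (hJ _) (fun n => hE (r n))
    (fun n => (l n).2.orthogonal) (fun n => (r n).2)

lemma GwidLE.exists_shortExactSeq {M : ModuleCat.{u} R} {n : ℕ} (h : GwidLE R M n) :
    ∃ (G V : ModuleCat.{u} R) (f : M →ₗ[R] G) (g : G →ₗ[R] V),
      GorensteinWeakInjective R G ∧ ShortExactSeq R M G V f g ∧
        (n = 0 → Subsingleton V) ∧ ∀ k, n = k + 1 → GwidLE R V k := by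
  obtain ⟨G, d, ε, ⟨hε, h0, hd, hn⟩, hG⟩ := h
  refine ⟨G 0, .of R (LinearMap.range (d 0)), ε, (d 0).rangeRestrict, hG 0,
    ⟨hε, (d 0).surjective_rangeRestrict, ?_⟩, ?_, ?_⟩
  · rwa [LinearMap.exact_iff, LinearMap.ker_rangeRestrict, ← LinearMap.exact_iff]
  · rintro rfl
    exact ⟨fun x y => Subtype.ext ((hn 1 one_pos x.1).trans (hn 1 one_pos y.1).symm)⟩
  · rintro k rfl
    refine ⟨fun i => G (i + 1), fun i => d (i + 1), (LinearMap.range (d 0)).subtype,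
      ⟨Subtype.val_injective, ?_, fun i => hd (i + 1), fun i hi => hn (i + 1) (by lia)⟩,
      fun i => hG (i + 1)⟩
    rw [LinearMap.exact_iff, Submodule.range_subtype]
    exact LinearMap.exact_iff.1 (hd 0)

lemma ShortExactSeq.gwidLE_succ {M G V : ModuleCat.{u} R} {f : M →ₗ[R] G} {g : G →ₗ[R] V}
    (h : ShortExactSeq R M G V f g) (hG : GorensteinWeakInjective R G) {n : ℕ}
    (hV : GwidLE R V n) : GwidLE R M (n + 1) := by
  obtain ⟨T, d, ε, ⟨hε, h0, hd, hn⟩, hT⟩ := hV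
  let T' : ℕ → ModuleCat.{u} R := fun
    | 0 => G
    | i + 1 => T i
  let d' : ∀ i, T' i →ₗ[R] T' (i + 1) := fun
    | 0 => ε.comp g
    | i + 1 => d i
  refine ⟨T', d', f, ⟨h.1, ?_, ?_, ?_⟩, ?_⟩
  · exact LinearMap.exact_iff.2 ((LinearMap.ker_comp_of_ker_eq_bot _
      (LinearMap.ker_eq_bot.2 hε)).trans (LinearMap.exact_iff.1 h.2.2))
  · rintro (_ | i)
    · exact LinearMap.exact_iff.2 ((LinearMap.exact_iff.1 h0).trans
        (LinearMap.range_comp_of_range_eq_top _ (LinearMap.range_eq_top.2 h.2.1)).symm)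
    · exact hd i
  · rintro (_ | i) hi
    · lia
    · exact hn i (by lia)
  · rintro (_ | i)
    exacts [hG, hT i]

lemma GorensteinWeakInjective.gwidLE_zero {M : ModuleCat.{u} R}
    (hM : GorensteinWeakInjective R M) : GwidLE R M 0 := by
  let T : ℕ → ModuleCat.{u} R := fun
    | 0 => M
    | _ + 1 => .of R PUnit
  have hT : ∀ i, Subsingleton (T (i + 1)) := fun _ => inferInstanceAs (Subsingleton PUnit)
  refine ⟨T, fun _ => 0, LinearMap.id, ⟨fun _ _ => id, fun x => ?_, fun i x => ?_, ?_⟩, ?_⟩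
  · exact ⟨fun _ => ⟨x, rfl⟩, fun _ => rfl⟩
  · exact ⟨fun _ => ⟨0, (hT i).elim _ _⟩, fun _ => rfl⟩
  · rintro (_ | i) hi x
    · lia
    · exact (hT i).elim _ _
  · rintro (_ | i)
    · exact hM
    · have := hT i
      exact OrthogonallyResolved.of_subsingleton.gorensteinWeakInjective

lemma GwidLE.subsingleton_ext {M : ModuleCat.{u} R} {n : ℕ} (h : GwidLE R M n)
    {W : ModuleCat.{u} R} (hW : WeakInjective R W) : Subsingleton (Abelian.Ext W M (n + 1)) := by
  induction n generalizing M with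
  | zero =>
    obtain ⟨G, V, f, g, hG, hs, hV, -⟩ := h.exists_shortExactSeq
    have := hV rfl
    have := hG.orthogonallyResolved.orthogonal W hW 0
    exact hs.subsingleton_ext_left_one fun φ => ⟨0, LinearMap.ext fun _ => Subsingleton.elim _ _⟩
  | succ n ih =>
    obtain ⟨G, V, f, g, hG, hs, -, hV⟩ := h.exists_shortExactSeq
    exact hs.subsingleton_ext_left (hG.orthogonallyResolved.orthogonal W hW _) (ih (hV n rfl))

lemma GwidLE.orthogonallyResolved {M : ModuleCat.{u} R} {n : ℕ} (h : GwidLE R M n)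
    (hM : WeakInjectiveOrthogonal M) : OrthogonallyResolved M := by
  induction n generalizing M with
  | zero =>
    obtain ⟨G, V, f, g, hG, hs, hV, -⟩ := h.exists_shortExactSeq
    have := hV rfl
    exact .kernel hs hM hG.orthogonallyResolved .of_subsingleton
  | succ n ih =>
    obtain ⟨G, V, f, g, hG, hs, -, hV⟩ := h.exists_shortExactSeq
    exact .kernel hs hM hG.orthogonallyResolved
      (ih (hV n rfl) (hs.orthogonal_right hM hG.orthogonallyResolved.orthogonal))

/-- If every orthogonal module is Gorenstein weak injective, then vanishing of `Ext(W, M)` above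
degree `n` for weak injective `W` bounds the dimension of `M`. -/
lemma gwidLE_of_subsingleton_ext
    (h : ∀ M : ModuleCat.{u} R, WeakInjectiveOrthogonal M → GorensteinWeakInjective R M) (n : ℕ)
    {M : ModuleCat.{u} R} (hM : ∀ W : ModuleCat.{u} R, WeakInjective R W → ∀ i, n ≤ i →
      Subsingleton (Abelian.Ext W M (i + 1))) : GwidLE R M n := by
  induction n generalizing M with
  | zero => exact (h M fun W hW i => hM W hW i i.zero_le).gwidLE_zero
  | succ n ih =>
    obtain ⟨E, V, f, g, hE, hs⟩ := exists_injective_embedding M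
    exact hs.gwidLE_succ (h E (weakInjectiveOrthogonal_of_injective hE)) (ih fun W hW i hi =>
      hs.subsingleton_ext_right (subsingleton_ext_of_injective hE W i) (hM W hW (i + 1) (by lia)))

lemma hasProjectiveDimensionLE_of_pdLE {M : ModuleCat.{u} R} {n : ℕ} (h : PdLE R M n) :
    HasProjectiveDimensionLE M n := by
  induction n generalizing M with
  | zero =>
    obtain ⟨P, d, ε, ⟨hε, h0, -, hn⟩, hP⟩ := h
    have hs : ShortExactSeq R (P 1) (P 0) M (d 0) ε :=
      ⟨fun x y _ => (hn 1 one_pos x).trans (hn 1 one_pos y).symm, hε, h0⟩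
    have := hP 0
    exact hs.shortExact.hasProjectiveDimensionLT_X₃ 0
      ((ModuleCat.isZero_iff_subsingleton (M := P 1)).2 ⟨fun x y =>
        (hn 1 one_pos x).trans (hn 1 one_pos y).symm⟩).hasProjectiveDimensionLT_zero
      (inferInstanceAs (HasProjectiveDimensionLT (P 0) 1))
  | succ n ih =>
    obtain ⟨P, d, ε, ⟨hε, h0, hd, hn⟩, hP⟩ := h
    have hs : ShortExactSeq R (.of R (LinearMap.ker ε)) (P 0) M (LinearMap.ker ε).subtype ε :=
      ⟨Subtype.val_injective, hε, LinearMap.exact_subtype_ker_map ε⟩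
    have hK : PdLE R (.of R (LinearMap.ker ε)) n := by
      refine ⟨fun i => P (i + 1), fun i => d (i + 1),
        LinearMap.codRestrict _ (d 0) h0.apply_apply_eq_zero,
        ⟨fun y => ?_, ?_, fun i => hd (i + 1), fun i hi => hn (i + 1) (by lia)⟩,
        fun i => hP (i + 1)⟩
      · obtain ⟨x, hx⟩ := (h0 y.1).1 y.2
        exact ⟨x, Subtype.ext hx⟩
      · exact LinearMap.exact_iff.2 ((LinearMap.ker_codRestrict _ _ _).trans
          (LinearMap.exact_iff.1 (hd 0)))
    have := hP 0
    have : HasProjectiveDimensionLT (P 0) (n + 1 + 1) :=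
      hasProjectiveDimensionLT_of_ge _ 1 _ (by lia)
    exact hs.shortExact.hasProjectiveDimensionLT_X₃ (n + 1) (ih hK) this

lemma ShortExactSeq.pdLE_succ {K Q M : ModuleCat.{u} R} {f : K →ₗ[R] Q} {g : Q →ₗ[R] M}
    (h : ShortExactSeq R K Q M f g) (hQ : Module.Projective R Q) {n : ℕ}
    (hK : PdLE R K n) : PdLE R M (n + 1) := by
  obtain ⟨T, d, ε, ⟨hε, h0, hd, hn⟩, hT⟩ := hK
  let P : ℕ → ModuleCat.{u} R := fun
    | 0 => Q
    | i + 1 => T i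
  let d' : ∀ i, P (i + 1) →ₗ[R] P i := fun
    | 0 => f.comp ε
    | i + 1 => d i
  refine ⟨P, d', g, ⟨h.2.1, ?_, ?_, ?_⟩, ?_⟩
  · exact LinearMap.exact_iff.2 ((LinearMap.exact_iff.1 h.2.2).trans
      (LinearMap.range_comp_of_range_eq_top _ (LinearMap.range_eq_top.2 hε)).symm)
  · rintro (_ | i)
    · exact LinearMap.exact_iff.2 ((LinearMap.ker_comp_of_ker_eq_bot _
        (LinearMap.ker_eq_bot.2 h.1)).trans (LinearMap.exact_iff.1 h0))
    · exact hd i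
  · rintro (_ | i) hi
    · lia
    · exact hn i (by lia)
  · rintro (_ | i)
    exacts [hQ, hT i]

lemma pdLE_of_hasProjectiveDimensionLE {M : ModuleCat.{u} R} {n : ℕ}
    (h : HasProjectiveDimensionLE M n) : PdLE R M n := by
  induction n generalizing M with
  | zero =>
    have hM : Module.Projective R M := by
      rw [IsProjective.iff_projective]
      exact (projective_iff_hasProjectiveDimensionLE_zero M).2 h
    let P : ℕ → ModuleCat.{u} R := fun
      | 0 => M
      | _ + 1 => .of R PUnit
    have hP : ∀ i, Subsingleton (P (i + 1)) := fun _ => inferInstanceAs (Subsingleton PUnit)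
    refine ⟨P, fun _ => 0, LinearMap.id, ⟨fun x => ⟨x, rfl⟩, fun x => ?_, fun i x => ?_, ?_⟩, ?_⟩
    · exact ⟨fun hx => ⟨0, hx.symm⟩, fun ⟨_, hx⟩ => hx.symm⟩
    · exact ⟨fun _ => ⟨0, (hP i).elim _ _⟩, fun _ => rfl⟩
    · rintro (_ | i) hi x
      · lia
      · exact (hP i).elim _ _
    · rintro (_ | i)
      · exact hM
      · have := hP i
        exact .of_free
  | succ n ih =>
    let F : ModuleCat.{u} R := .of R (M →₀ R)
    let p : F →ₗ[R] M := Finsupp.linearCombination R id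
    have hF : Module.Projective R F := inferInstanceAs (Module.Projective R (M →₀ R))
    have hs : ShortExactSeq R (.of R (LinearMap.ker p)) F M (LinearMap.ker p).subtype p :=
      ⟨Subtype.val_injective, Finsupp.linearCombination_id_surjective R M,
        LinearMap.exact_subtype_ker_map p⟩
    exact hs.pdLE_succ hF (ih (hs.shortExact.hasProjectiveDimensionLT_X₁ (n + 1)
      (hasProjectiveDimensionLT_of_ge F 1 _ (by lia)) h))

lemma pdLE_iff_hasProjectiveDimensionLE {M : ModuleCat.{u} R} {n : ℕ} :
    PdLE R M n ↔ HasProjectiveDimensionLE M n :=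
  ⟨hasProjectiveDimensionLE_of_pdLE, pdLE_of_hasProjectiveDimensionLE⟩

lemma hasProjectiveDimensionLE_of_widLE {n : ℕ}
    (h : ∀ W : ModuleCat.{u} R, WeakInjective R W → HasProjectiveDimensionLE W n) {k : ℕ}
    {M : ModuleCat.{u} R} (hM : WidLE R M k) : HasProjectiveDimensionLE M n := by
  induction k generalizing M with
  | zero => exact h M hM
  | succ k ih =>
    obtain ⟨E, V, f, g, hE, hs⟩ := exists_injective_embedding M
    have := ih (hs.widLE_right hE hM)
    exact hs.shortExact.hasProjectiveDimensionLT_X₁ (n + 1) (h E (weakInjective_of_injective hE))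
      (hasProjectiveDimensionLT_of_ge V (n + 1) _ (by lia))

end Auxiliary

/-- If the left global Gorenstein weak injective dimension of `R` is finite, then
`ℓ.GwiD(R) ≤ n` iff every weak injective module has projective dimension `≤ n`, iff
every module of finite weak injective dimension has projective dimension `≤ n`. -/
theorem global_gwid_le_iff (h : ∃ m : ℕ, ∀ M : ModuleCat.{u} R, GwidLE R M m) (n : ℕ) :
    ((∀ M : ModuleCat.{u} R, GwidLE R M n) ↔
      ∀ W : ModuleCat.{u} R, WeakInjective R W → PdLE R W n) ∧
    ((∀ W : ModuleCat.{u} R, WeakInjective R W → PdLE R W n) ↔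
      ∀ W : ModuleCat.{u} R, (∃ k : ℕ, WidLE R W k) → PdLE R W n) := by
  have orth (M : ModuleCat.{u} R) (hM : WeakInjectiveOrthogonal M) :
      GorensteinWeakInjective R M :=
    (h.choose_spec M).orthogonallyResolved hM |>.gorensteinWeakInjective
  simp only [pdLE_iff_hasProjectiveDimensionLE]
  refine ⟨⟨fun hn W hW => ?_, fun hn M => ?_⟩, fun hn M ⟨k, hk⟩ => ?_, fun hn W hW => hn W ⟨0, hW⟩⟩
  · exact hasProjectiveDimensionLT_of_enoughInjectives W (n + 1) fun M =>
      (hn M).subsingleton_ext hW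
  · refine gwidLE_of_subsingleton_ext orth n fun W hW i hi => ?_
    have := hn W hW
    exact HasProjectiveDimensionLT.subsingleton W (n + 1) (i + 1) (by lia) M
  · exact hasProjectiveDimensionLE_of_widLE hn hk
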